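/- Reflection symmetrization of the p-modulus: let m ≥ 1, let N₀* be the closed dihedral sector {[ρ,θ,x'] : 0 ≤ θ ≤ π/m} in cylindrical coordinates on ℝⁿ, let Γ₀* be a family of curves contained in N₀*, and let Γ* be the family of curves γ* = ⋃_{k=0}^{2m-1} γ_k*, where γ_k* is obtained from γ₀* ∈ Γ₀* by successive reflections in the hyperplanes θ = πk/m. Then M_p(Γ*) = (2m)^{1-p} M_p(Γ₀*) for every p > 1. -/

import Mathlib

open MeasureTheory ENNReal Real

/-- A Borel density `ρ` is admissible for the curve family `Γ` if the line integral of `ρ`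
(against one-dimensional Hausdorff measure) along every curve of `Γ` is at least `1`. -/
def Admissible (n : ℕ) (Γ : Set (Set (EuclideanSpace ℝ (Fin n))))
    (ρ : EuclideanSpace ℝ (Fin n) → ℝ≥0∞) : Prop :=
  Measurable ρ ∧ ∀ γ ∈ Γ, 1 ≤ ∫⁻ x in γ, ρ x ∂(μH[1])

/-- The `p`-modulus of a family of curves in `ℝⁿ`. -/
noncomputable def pMod (n : ℕ) (p : ℝ) (Γ : Set (Set (EuclideanSpace ℝ (Fin n)))) : ℝ≥0∞ :=
  ⨅ ρ ∈ {ρ | Admissible n Γ ρ}, ∫⁻ x, ρ x ^ p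

/-- The `k`-th coordinate (indexed by a natural number) of a point of `ℝⁿ`. -/
def coordN (n : ℕ) (x : EuclideanSpace ℝ (Fin n)) (k : ℕ) : ℝ :=
  ∑ j : Fin n, if j.val = k then x j else 0

/-- Rotation by the angle `β` in the `(x₁,x₂)`-plane (cylindrical coordinates
`[ρ,θ,x'] ↦ [ρ,θ+β,x']`), identity on the remaining coordinates. -/
noncomputable def planeRot (n : ℕ) (β : ℝ) (x : EuclideanSpace ℝ (Fin n)) :
    EuclideanSpace ℝ (Fin n) :=
  (EuclideanSpace.equiv (Fin n) ℝ).symm (fun i =>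
    if i.val = 0 then Real.cos β * coordN n x 0 - Real.sin β * coordN n x 1
    else if i.val = 1 then Real.sin β * coordN n x 0 + Real.cos β * coordN n x 1
    else x i)

/-- Reflection in the hyperplane containing the half-hyperplane `θ = α`
(in cylindrical coordinates `x₁ = ρ cos θ, x₂ = ρ sin θ`). -/
noncomputable def planeRefl (n : ℕ) (α : ℝ) (x : EuclideanSpace ℝ (Fin n)) :
    EuclideanSpace ℝ (Fin n) :=
  (EuclideanSpace.equiv (Fin n) ℝ).symm (fun i =>
    if i.val = 0 then Real.cos (2 * α) * coordN n x 0 + Real.sin (2 * α) * coordN n x 1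
    else if i.val = 1 then Real.sin (2 * α) * coordN n x 0 - Real.cos (2 * α) * coordN n x 1
    else x i)

/-- The closed dihedral sector `{[ρ,θ,x'] : θ₁ ≤ θ ≤ θ₂}` in cylindrical coordinates. -/
def sector (n : ℕ) (θ₁ θ₂ : ℝ) : Set (EuclideanSpace ℝ (Fin n)) :=
  {x | ∃ ρ θ : ℝ, 0 ≤ ρ ∧ θ₁ ≤ θ ∧ θ ≤ θ₂ ∧
    coordN n x 0 = ρ * Real.cos θ ∧ coordN n x 1 = ρ * Real.sin θ}

/-- The successive reflections `γ₀* = γ`, `γ_k* = φ_k(γ_{k-1}*)`, where `φ_k` is the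
reflection in the hyperplane containing `θ = πk/m`. -/
noncomputable def reflImages (n m : ℕ) (γ : Set (EuclideanSpace ℝ (Fin n))) :
    ℕ → Set (EuclideanSpace ℝ (Fin n))
  | 0 => γ
  | k + 1 => planeRefl n (Real.pi * (k + 1) / m) '' reflImages n m γ k


lemma coordN_lt (n : ℕ) (x : EuclideanSpace ℝ (Fin n)) (k : ℕ) (hk : k < n) :
    coordN n x k = x ⟨k, hk⟩ := by
  unfold coordN
  rw [Finset.sum_eq_single ⟨k, hk⟩]
  · simp
  · intro b _ hb
    rw [if_neg]
    intro h
    exact hb (Fin.ext h)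
  · simp

lemma planeRefl_apply (n : ℕ) (α : ℝ) (x : EuclideanSpace ℝ (Fin n)) (i : Fin n) :
    planeRefl n α x i =
      if i.val = 0 then Real.cos (2 * α) * coordN n x 0 + Real.sin (2 * α) * coordN n x 1
    else if i.val = 1 then Real.sin (2 * α) * coordN n x 0 - Real.cos (2 * α) * coordN n x 1
    else x i := by
  simp [planeRefl]

lemma coordN_refl0 (n : ℕ) (hn : 2 ≤ n) (α : ℝ) (x : EuclideanSpace ℝ (Fin n)) :
    coordN n (planeRefl n α x) 0
      = Real.cos (2 * α) * coordN n x 0 + Real.sin (2 * α) * coordN n x 1 := by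
  rw [coordN_lt n (planeRefl n α x) 0 (by omega), planeRefl_apply]
  simp

lemma coordN_refl1 (n : ℕ) (hn : 2 ≤ n) (α : ℝ) (x : EuclideanSpace ℝ (Fin n)) :
    coordN n (planeRefl n α x) 1
      = Real.sin (2 * α) * coordN n x 0 - Real.cos (2 * α) * coordN n x 1 := by
  rw [coordN_lt n (planeRefl n α x) 1 (by omega), planeRefl_apply]
  simp

lemma refl_invol (n : ℕ) (hn : 2 ≤ n) (α : ℝ) (x : EuclideanSpace ℝ (Fin n)) :
    planeRefl n α (planeRefl n α x) = x := by
  have h := Real.sin_sq_add_cos_sq (2 * α)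
  ext i
  rw [planeRefl_apply, coordN_refl0 n hn, coordN_refl1 n hn]
  split_ifs with h0 h1
  · have : i = ⟨0, by omega⟩ := Fin.ext h0
    rw [this, ← coordN_lt n x 0 (by omega)]
    linear_combination (coordN n x 0) * h
  · have : i = ⟨1, by omega⟩ := Fin.ext h1
    rw [this, ← coordN_lt n x 1 (by omega)]
    linear_combination (coordN n x 1) * h
  · rw [planeRefl_apply, if_neg h0, if_neg h1]

lemma coordN_add (n : ℕ) (x y : EuclideanSpace ℝ (Fin n)) (k : ℕ) :
    coordN n (x + y) k = coordN n x k + coordN n y k := by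
  unfold coordN
  rw [← Finset.sum_add_distrib]
  apply Finset.sum_congr rfl
  intro i _
  split_ifs <;> simp

lemma coordN_smul (n : ℕ) (c : ℝ) (x : EuclideanSpace ℝ (Fin n)) (k : ℕ) :
    coordN n (c • x) k = c * coordN n x k := by
  unfold coordN
  rw [Finset.mul_sum]
  apply Finset.sum_congr rfl
  intro i _
  split_ifs <;> simp

noncomputable def coordL (n k : ℕ) : EuclideanSpace ℝ (Fin n) →ₗ[ℝ] ℝ where
  toFun x := coordN n x k
  map_add' x y := coordN_add n x y k
  map_smul' c x := coordN_smul n c x k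

noncomputable def reflE (n : ℕ) (hn : 2 ≤ n) (α : ℝ) :
    EuclideanSpace ℝ (Fin n) ≃ₗᵢ[ℝ] EuclideanSpace ℝ (Fin n) where
  toFun := planeRefl n α
  invFun := planeRefl n α
  left_inv := refl_invol n hn α
  right_inv := refl_invol n hn α
  map_add' x y := by
    ext i
    rw [PiLp.add_apply, planeRefl_apply, planeRefl_apply, planeRefl_apply, coordN_add, coordN_add,
      PiLp.add_apply]
    split_ifs <;> ring
  map_smul' c x := by
    ext i
    rw [RingHom.id_apply, PiLp.smul_apply, planeRefl_apply, planeRefl_apply, coordN_smul,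
      coordN_smul, PiLp.smul_apply]
    simp only [smul_eq_mul]
    split_ifs <;> ring
  norm_map' x := by
    obtain ⟨n, rfl⟩ : ∃ k, n = k + 2 := ⟨n - 2, by omega⟩
    have h := Real.sin_sq_add_cos_sq (2 * α)
    change ‖planeRefl (n+2) α x‖ = ‖x‖
    rw [EuclideanSpace.norm_eq, EuclideanSpace.norm_eq]
    congr 1
    simp only [Real.norm_eq_abs, sq_abs]
    rw [Fin.sum_univ_succ, Fin.sum_univ_succ, Fin.sum_univ_succ (n := n + 1), Fin.sum_univ_succ (n := n)]
    simp only [planeRefl_apply, coordN_lt _ x 0 (by omega : 0 < n + 2),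
      coordN_lt _ x 1 (by omega : 1 < n + 2)]
    have e0 : (⟨0, by omega⟩ : Fin (n+2)) = 0 := rfl
    have e1 : (⟨1, by omega⟩ : Fin (n+2)) = Fin.succ 0 := rfl
    rw [e0, e1]
    simp only [Fin.val_succ, Fin.val_zero, if_true, zero_add, one_ne_zero, if_false, Nat.add_eq_zero_iff,
      and_false, Nat.add_eq_right]
    linear_combination (x 0 ^ 2 + x (Fin.succ 0) ^ 2) * h

noncomputable def TE (n m : ℕ) (hn : 2 ≤ n) :
    ℕ → EuclideanSpace ℝ (Fin n) ≃ₗᵢ[ℝ] EuclideanSpace ℝ (Fin n)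
  | 0 => LinearIsometryEquiv.refl ℝ _
  | k + 1 => (TE n m hn k).trans (reflE n hn (Real.pi * (k + 1) / m))

lemma reflImages_eq (n m : ℕ) (hn : 2 ≤ n) (γ : Set (EuclideanSpace ℝ (Fin n))) (k : ℕ) :
    reflImages n m γ k = TE n m hn k '' γ := by
  induction k with
  | zero => simp [reflImages, TE]
  | succ k ih =>
    rw [reflImages, ih, ← Set.image_comp]
    rfl

lemma TE_sector (n m : ℕ) (hn : 2 ≤ n) (k : ℕ) (x : EuclideanSpace ℝ (Fin n))
    (hx : x ∈ sector n 0 (Real.pi / m)) :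
    TE n m hn k x ∈ sector n (Real.pi * k / m) (Real.pi * (k + 1) / m) := by
  induction k with
  | zero => simpa [TE] using hx
  | succ k ih =>
    obtain ⟨r, θ, hr, h1, h2, h3, h4⟩ := ih
    refine ⟨r, 2 * (Real.pi * (k + 1) / m) - θ, hr, ?_, ?_, ?_, ?_⟩
    · push_cast; linarith
    · push_cast
      have : Real.pi * (k + 1 + 1) / m = 2 * (Real.pi * (k + 1) / m) - Real.pi * k / m := by ring
      linarith
    · change coordN n (planeRefl n _ (TE n m hn k x)) 0 = _
      rw [coordN_refl0 n hn, h3, h4, Real.cos_sub]; ring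
    · change coordN n (planeRefl n _ (TE n m hn k x)) 1 = _
      rw [coordN_refl1 n hn, h3, h4, Real.sin_sub]; ring

lemma continuous_coordN (n k : ℕ) : Continuous (fun x => coordN n x k) := 
  (coordL n k).continuous_of_finiteDimensional

lemma measurableSet_sector (n : ℕ) (a b : ℝ) : MeasurableSet (sector n a b) := by
  have hc : IsClosed (Set.Ici (0:ℝ) ×ˢ Set.Icc a b) := isClosed_Ici.prod isClosed_Icc
  have hs := (isSigmaCompact_univ.of_isClosed_subset hc (Set.subset_univ _)).image (f := fun q : ℝ × ℝ => (q.1 * Real.cos q.2, q.1 * Real.sin q.2))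
    (by fun_prop)
  have hm : MeasurableSet ((fun q : ℝ × ℝ => (q.1 * Real.cos q.2, q.1 * Real.sin q.2)) ''
      (Set.Ici (0:ℝ) ×ˢ Set.Icc a b)) := by
    obtain ⟨K, hK, hKe⟩ := hs
    rw [← hKe]
    exact MeasurableSet.iUnion fun i => (hK i).measurableSet
  have := ((continuous_coordN n 0).prodMk (continuous_coordN n 1)).measurable hm
  convert this using 1
  ext x
  simp only [sector, Set.mem_setOf_eq, Set.mem_preimage, Set.mem_image, Set.mem_prod, Set.mem_Ici,
    Set.mem_Icc, Prod.mk.injEq, Prod.exists]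
  constructor
  · rintro ⟨r, θ, h1, h2, h3, h4, h5⟩
    exact ⟨r, θ, ⟨h1, h2, h3⟩, h4.symm, h5.symm⟩
  · rintro ⟨r, θ, ⟨h1, h2, h3⟩, h4, h5⟩
    exact ⟨r, θ, h1, h2, h3, h4.symm, h5.symm⟩

lemma hyper_null (n : ℕ) (hn : 2 ≤ n) (α : ℝ) :
    volume {x : EuclideanSpace ℝ (Fin n) |
      Real.sin α * coordN n x 0 - Real.cos α * coordN n x 1 = 0} = 0 := by
  let f : EuclideanSpace ℝ (Fin n) →ₗ[ℝ] ℝ := Real.sin α • coordL n 0 - Real.cos α • coordL n 1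
  have h := Measure.addHaar_submodule (volume : Measure (EuclideanSpace ℝ (Fin n)))
    (LinearMap.ker f) ?_
  · convert h using 2
    ext x
    rfl
  · intro ht
    rw [LinearMap.ker_eq_top] at ht
    have h0 : f (EuclideanSpace.single ⟨0, by omega⟩ 1) = 0 := by rw [ht]; rfl
    have h1 : f (EuclideanSpace.single ⟨1, by omega⟩ 1) = 0 := by rw [ht]; rfl
    have := Real.sin_sq_add_cos_sq α
    simp [f, coordL, coordN_lt n _ 0 (by omega : 0 < n), coordN_lt n _ 1 (by omega : 1 < n)] at h0 h1
    simp [h0, h1] at this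

lemma sector_inter (n m : ℕ) (hm : 1 ≤ m) (j k : ℕ) (hjk : j < k) (hk : k < 2 * m)
    (x : EuclideanSpace ℝ (Fin n))
    (h1 : x ∈ sector n (Real.pi * j / m) (Real.pi * (j + 1) / m))
    (h2 : x ∈ sector n (Real.pi * k / m) (Real.pi * (k + 1) / m)) :
    Real.sin 0 * coordN n x 0 - Real.cos 0 * coordN n x 1 = 0 ∨
    Real.sin (Real.pi * k / m) * coordN n x 0 - Real.cos (Real.pi * k / m) * coordN n x 1 = 0 := by
  obtain ⟨r, θ, hr, a1, a2, a3, a4⟩ := h1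
  obtain ⟨s, η, hs, b1, b2, b3, b4⟩ := h2
  have hm0 : (0:ℝ) < m := by exact_mod_cast hm
  have hpi := Real.pi_pos
  have c1 : 0 ≤ θ := le_trans (by positivity) a1
  have c2 : η ≤ 2 * Real.pi := by
    refine b2.trans ?_
    rw [div_le_iff₀ hm0]
    have : (k:ℝ) + 1 ≤ 2 * m := by exact_mod_cast hk
    nlinarith
  have c3 : Real.pi * (j + 1) / m ≤ Real.pi * k / m := by
    have : (j:ℝ) + 1 ≤ k := by exact_mod_cast hjk
    gcongr
  have hrs : r = s := by
    have e1 := Real.sin_sq_add_cos_sq θ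
    have e2 := Real.sin_sq_add_cos_sq η
    have : r ^ 2 = s ^ 2 := by
      have : r ^ 2 = (coordN n x 0) ^ 2 + (coordN n x 1) ^ 2 := by
        rw [a3, a4]; linear_combination (-r ^ 2) * e1
      rw [this, b3, b4]; linear_combination (s ^ 2) * e2
    exact (pow_left_inj₀ hr hs two_ne_zero).1 this
  subst hrs
  rcases eq_or_lt_of_le hr with h0 | h0
  · left; rw [a3, a4, ← h0]; simp
  have d1 : Real.cos θ = Real.cos η := mul_left_cancel₀ h0.ne' (a3.symm.trans b3)
  have d2 : Real.sin θ = Real.sin η := mul_left_cancel₀ h0.ne' (a4.symm.trans b4)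
  have d3 : Real.cos (η - θ) = 1 := by
    rw [Real.cos_sub, d1, d2]; linarith [Real.sin_sq_add_cos_sq η]
  rcases eq_or_lt_of_le c1 with e | e
  · left; rw [a3, a4, ← e]; simp
  right
  have : η - θ = 0 := by
    refine (Real.cos_eq_one_iff_of_lt_of_lt ?_ ?_).1 d3 <;> linarith
  have : θ = Real.pi * k / m := by linarith
  rw [a3, a4, ← this]; ring

lemma main_abs {n : ℕ} (M : ℕ) (hM : M ≠ 0) (p : ℝ) (hp : 1 < p)
    (T : ℕ → EuclideanSpace ℝ (Fin n) ≃ₗᵢ[ℝ] EuclideanSpace ℝ (Fin n))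
    (N : Set (EuclideanSpace ℝ (Fin n))) (hN : MeasurableSet N)
    (hd : ∀ j k, j < k → k < M → volume (((T j).symm ⁻¹' N) ∩ ((T k).symm ⁻¹' N)) = 0)
    (Γ : Set (Set (EuclideanSpace ℝ (Fin n)))) (hΓ : ∀ γ ∈ Γ, γ ⊆ N) :
    pMod n p {S | ∃ γ ∈ Γ, S = ⋃ k ∈ Finset.range M, T k '' γ}
      = (M : ℝ≥0∞) ^ (1 - p) * pMod n p Γ := by
  have hM0 : (M : ℝ≥0∞) ≠ 0 := by exact_mod_cast hM
  have hMt : (M : ℝ≥0∞) ≠ ⊤ := ENNReal.natCast_ne_top M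
  have hNk : ∀ k, MeasurableSet ((T k).symm ⁻¹' N) := fun k => (T k).symm.continuous.measurable hN
  have hAE : (↑(Finset.range M) : Set ℕ).Pairwise
      (Function.onFun (AEDisjoint volume) fun k => (T k).symm ⁻¹' N) := by
    intro j hj k hk hjk
    simp only [Finset.coe_range, Set.mem_Iio] at hj hk
    rcases lt_or_gt_of_ne hjk with h | h
    · exact hd j k h hk
    · exact (show AEDisjoint volume _ _ from hd k j h hj).symm
  -- line integral change of variables
  have hcv : ∀ k (γ : Set (EuclideanSpace ℝ (Fin n))) (f : EuclideanSpace ℝ (Fin n) → ℝ≥0∞),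
      Measurable f →
      ∫⁻ x in T k '' γ, f x ∂(μH[1]) = ∫⁻ x in γ, f (T k x) ∂(μH[1]) := by
    intro k γ f hf
    have h1 : MeasurePreserving (T k) (μH[1]) (μH[1]) :=
      (T k).toIsometryEquiv.measurePreserving_hausdorffMeasure 1
    have hme : MeasurableEmbedding (T k) := (T k).toHomeomorph.measurableEmbedding
    exact (h1.setLIntegral_comp_emb hme f γ).symm
  have hvol : ∀ k (f : EuclideanSpace ℝ (Fin n) → ℝ≥0∞), Measurable f →
      ∫⁻ x in (T k).symm ⁻¹' N, f x = ∫⁻ x in N, f (T k x) := by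
    intro k f hf
    have hme : MeasurableEmbedding (T k) := (T k).toHomeomorph.measurableEmbedding
    rw [← (T k).measurePreserving.setLIntegral_comp_preimage (hNk k) hf]
    congr 2
    ext x; simp
  apply le_antisymm
  · -- upper bound
    have key : (M : ℝ≥0∞) ^ (p - 1) * pMod n p {S | ∃ γ ∈ Γ, S = ⋃ k ∈ Finset.range M, T k '' γ}
        ≤ pMod n p Γ := by
      refine le_iInf₂ fun ρ hρ => ?_
      obtain ⟨hρm, hρa⟩ := hρ
      let g : ℕ → EuclideanSpace ℝ (Fin n) → ℝ≥0∞ := fun k =>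
        ((T k).symm ⁻¹' N).indicator (fun x => ρ ((T k).symm x))
      have hgm : ∀ k, Measurable (g k) := fun k =>
        (hρm.comp (T k).symm.continuous.measurable).indicator (hNk k)
      let R : EuclideanSpace ℝ (Fin n) → ℝ≥0∞ := fun x =>
        (M : ℝ≥0∞)⁻¹ * ∑ k ∈ Finset.range M, g k x
      have hRm : Measurable R := by
        apply Measurable.const_mul
        exact Finset.measurable_fun_sum _ fun k _ => hgm k
      have hRa : Admissible n {S | ∃ γ ∈ Γ, S = ⋃ k ∈ Finset.range M, T k '' γ} R := by
        refine ⟨hRm, ?_⟩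
        rintro S ⟨γ, hγ, rfl⟩
        have h1 : ∀ k ∈ Finset.range M,
            1 ≤ ∫⁻ x in ⋃ k ∈ Finset.range M, T k '' γ, g k x ∂(μH[1]) := by
          intro k hk
          calc 1 ≤ ∫⁻ x in γ, ρ x ∂(μH[1]) := hρa γ hγ
            _ = ∫⁻ x in N ∩ γ, ρ x ∂(μH[1]) := by
              rw [Set.inter_eq_right.2 (hΓ γ hγ)]
            _ = ∫⁻ x in γ, N.indicator ρ x ∂(μH[1]) := (setLIntegral_indicator hN ρ).symm
            _ = ∫⁻ x in γ, g k (T k x) ∂(μH[1]) := by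
              congr 1
              ext x
              by_cases hx : x ∈ N
              · have h' : T k x ∈ (T k).symm ⁻¹' N := by simpa using hx
                simp only [g]
                rw [Set.indicator_of_mem hx, Set.indicator_of_mem h']
                simp
              · have h' : T k x ∉ (T k).symm ⁻¹' N := by simpa using hx
                simp only [g]
                rw [Set.indicator_of_notMem hx, Set.indicator_of_notMem h']
            _ = ∫⁻ x in T k '' γ, g k x ∂(μH[1]) := (hcv k γ _ (hgm k)).symm
            _ ≤ _ := lintegral_mono_set (Set.subset_biUnion_of_mem (u := fun k => T k '' γ) hk)
        simp only [R]
        rw [lintegral_const_mul _ (Finset.measurable_fun_sum _ fun k _ => hgm k),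
          lintegral_finsetSum _ fun k _ => hgm k]
        calc (1 : ℝ≥0∞) = (M : ℝ≥0∞)⁻¹ * ∑ k ∈ Finset.range M, 1 := by
              simp [ENNReal.inv_mul_cancel hM0 hMt]
          _ ≤ _ := by gcongr with k hk; exact h1 k hk
      have hI : ∫⁻ x, R x ^ p ≤ (M : ℝ≥0∞) ^ (1 - p) * ∫⁻ x, ρ x ^ p := by
        have hae : ∀ᵐ x, (∑ k ∈ Finset.range M, g k x) ^ p = ∑ k ∈ Finset.range M, g k x ^ p := by
          have : ∀ᵐ x : EuclideanSpace ℝ (Fin n), ∀ j k, j < k → k < M →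
              x ∉ ((T j).symm ⁻¹' N) ∩ ((T k).symm ⁻¹' N) := by
            simp only [ae_all_iff]
            intro j k hjk hk
            exact measure_eq_zero_iff_ae_notMem.1 (hd j k hjk hk)
          filter_upwards [this] with x hx
          by_cases h : ∃ k ∈ Finset.range M, x ∈ (T k).symm ⁻¹' N
          · obtain ⟨k, hk, hxk⟩ := h
            have hz : ∀ j ∈ Finset.range M, j ≠ k → g j x = 0 := by
              intro j hj hjk
              apply Set.indicator_of_notMem
              intro hxj
              rw [Finset.mem_range] at hj hk
              rcases lt_or_gt_of_ne hjk with h | h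
              · exact hx j k h hk ⟨hxj, hxk⟩
              · exact hx k j h hj ⟨hxk, hxj⟩
            rw [Finset.sum_eq_single_of_mem k hk hz, Finset.sum_eq_single_of_mem k hk]
            intro j hj hjk
            rw [hz j hj hjk, ENNReal.zero_rpow_of_pos (by linarith)]
          · push Not at h
            have hz : ∀ j ∈ Finset.range M, g j x = 0 := fun j hj =>
              Set.indicator_of_notMem (h j hj) _
            rw [Finset.sum_eq_zero hz, ENNReal.zero_rpow_of_pos (by linarith), Finset.sum_eq_zero]
            intro j hj
            rw [hz j hj, ENNReal.zero_rpow_of_pos (by linarith)]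
        have hk : ∀ k, ∫⁻ x, g k x ^ p ≤ ∫⁻ x, ρ x ^ p := by
          intro k
          calc ∫⁻ x, g k x ^ p ≤ ∫⁻ x, (ρ ((T k).symm x)) ^ p := by
                gcongr with x
                exact Set.indicator_le_self _ _ x
            _ = _ := (T k).symm.measurePreserving.lintegral_comp (f := fun x => ρ x ^ p)
                (hρm.pow_const p)
        calc ∫⁻ x, R x ^ p = ∫⁻ x, (M : ℝ≥0∞)⁻¹ ^ p * ∑ k ∈ Finset.range M, g k x ^ p := by
              apply lintegral_congr_ae
              filter_upwards [hae] with x hx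
              simp only [R]
              rw [ENNReal.mul_rpow_of_nonneg _ _ (by linarith), hx]
          _ = (M : ℝ≥0∞)⁻¹ ^ p * ∑ k ∈ Finset.range M, ∫⁻ x, g k x ^ p := by
              rw [lintegral_const_mul _ (Finset.measurable_fun_sum _ fun k _ => (hgm k).pow_const p),
                lintegral_finsetSum _ fun k _ => (hgm k).pow_const p]
          _ ≤ (M : ℝ≥0∞)⁻¹ ^ p * ∑ k ∈ Finset.range M, ∫⁻ x, ρ x ^ p := by
              exact mul_le_mul_right (Finset.sum_le_sum fun k _ => hk k) _
          _ = (M : ℝ≥0∞) ^ (1 - p) * ∫⁻ x, ρ x ^ p := by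
              rw [Finset.sum_const, Finset.card_range, nsmul_eq_mul, ← mul_assoc]
              congr 1
              rw [ENNReal.inv_rpow, ← ENNReal.rpow_neg, sub_eq_neg_add,
                ENNReal.rpow_add _ _ hM0 hMt, ENNReal.rpow_one]
      calc _ ≤ (M : ℝ≥0∞) ^ (p - 1) * ((M : ℝ≥0∞) ^ (1 - p) * ∫⁻ x, ρ x ^ p) := by
            gcongr
            exact (iInf₂_le R hRa).trans hI
        _ = _ := by
            rw [← mul_assoc, ← ENNReal.rpow_add _ _ hM0 hMt]
            simp
    calc pMod n p {S | ∃ γ ∈ Γ, S = ⋃ k ∈ Finset.range M, T k '' γ}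
        = (M : ℝ≥0∞) ^ (1 - p) * ((M : ℝ≥0∞) ^ (p - 1) *
          pMod n p {S | ∃ γ ∈ Γ, S = ⋃ k ∈ Finset.range M, T k '' γ}) := by
          rw [← mul_assoc, ← ENNReal.rpow_add _ _ hM0 hMt]
          simp
      _ ≤ _ := by gcongr
  · refine le_iInf₂ fun ρ hρ => ?_
    obtain ⟨hρm, hρa⟩ := hρ
    let F : EuclideanSpace ℝ (Fin n) → ℝ≥0∞ := fun x => ∑ k ∈ Finset.range M, ρ (T k x)
    have hTm : ∀ k, Measurable fun x => ρ (T k x) := fun k =>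
      hρm.comp (T k).continuous.measurable
    have hFm : Measurable F := Finset.measurable_fun_sum _ fun k _ => hTm k
    have hadm : Admissible n Γ (N.indicator F) := by
      refine ⟨hFm.indicator hN, fun γ hγ => ?_⟩
      rw [setLIntegral_indicator hN, Set.inter_eq_right.2 (hΓ γ hγ)]
      simp only [F]
      rw [lintegral_finsetSum _ fun k _ => hTm k]
      refine (hρa _ ⟨γ, hγ, rfl⟩).trans ?_
      calc ∫⁻ x in ⋃ k ∈ Finset.range M, T k '' γ, ρ x ∂(μH[1])
          ≤ ∑ k ∈ Finset.range M, ∫⁻ x in T k '' γ, ρ x ∂(μH[1]) := by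
            generalize Finset.range M = s
            induction s using Finset.induction_on with
            | empty => simp
            | insert a s ha ih =>
              rw [Finset.set_biUnion_insert, Finset.sum_insert ha]
              exact (lintegral_union_le _ _ _).trans (by gcongr)
        _ = _ := Finset.sum_congr rfl fun k _ => hcv k γ ρ hρm
    calc (M : ℝ≥0∞) ^ (1 - p) * pMod n p Γ
        ≤ (M : ℝ≥0∞) ^ (1 - p) * ∫⁻ x, (N.indicator F x) ^ p := by
          gcongr; exact iInf₂_le _ hadm
      _ = (M : ℝ≥0∞) ^ (1 - p) * ∫⁻ x in N, F x ^ p := by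
          congr 1
          rw [← lintegral_indicator hN]
          congr 1
          ext x
          by_cases h : x ∈ N
          · simp [h]
          · simp [h, ENNReal.zero_rpow_of_pos (show 0 < p by linarith)]
      _ ≤ (M : ℝ≥0∞) ^ (1 - p) * ∫⁻ x in N, (M : ℝ≥0∞) ^ (p - 1) *
            ∑ k ∈ Finset.range M, ρ (T k x) ^ p := by
          gcongr with x
          simpa using ENNReal.rpow_sum_le_const_mul_sum_rpow (Finset.range M)
            (fun k => ρ (T k x)) hp.le
      _ = ∑ k ∈ Finset.range M, ∫⁻ x in N, ρ (T k x) ^ p := by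
          rw [lintegral_const_mul _ (Finset.measurable_fun_sum _ fun k _ => (hTm k).pow_const p),
            lintegral_finsetSum _ fun k _ => (hTm k).pow_const p, ← mul_assoc,
            ← ENNReal.rpow_add _ _ hM0 hMt]
          simp
      _ = ∑ k ∈ Finset.range M, ∫⁻ x in (T k).symm ⁻¹' N, ρ x ^ p :=
          Finset.sum_congr rfl fun k _ => (hvol k _ (hρm.pow_const p)).symm
      _ = ∫⁻ x in ⋃ k ∈ Finset.range M, (T k).symm ⁻¹' N, ρ x ^ p :=
          (lintegral_biUnion_finset₀ hAE (fun k _ => (hNk k).nullMeasurableSet) _).symm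
      _ ≤ _ := setLIntegral_le_lintegral _ _

/-- Lemma 2: `M_p(Γ*) = (2m)^{1-p} M_p(Γ₀*)` for the family `Γ*` obtained by `2m`-fold
reflection of the curves of a family `Γ₀*` lying in the sector `N₀* = {0 ≤ θ ≤ π/m}`. -/
theorem pMod_reflection (n : ℕ) (hn : 2 ≤ n) (m : ℕ) (hm : 1 ≤ m) (p : ℝ) (hp : 1 < p)
    (Γ₀ : Set (Set (EuclideanSpace ℝ (Fin n))))
    (hΓ₀ : ∀ γ ∈ Γ₀, γ ⊆ sector n 0 (Real.pi / m))
    (Γstar : Set (Set (EuclideanSpace ℝ (Fin n))))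
    (hΓstar : Γstar = {S | ∃ γ ∈ Γ₀, S = ⋃ k ∈ Finset.range (2 * m), reflImages n m γ k}) :
    pMod n p Γstar = (2 * m : ℝ≥0∞) ^ ((1 : ℝ) - p) * pMod n p Γ₀ := by
  have hM := main_abs (2 * m) (by omega) p hp (TE n m hn) (sector n 0 (Real.pi / m))
    (measurableSet_sector n _ _) ?_ Γ₀ hΓ₀
  · rw [hΓstar]
    simp only [reflImages_eq n m hn]
    rw [hM]
    push_cast
    rfl
  · intro j k hjk hk
    refine measure_mono_null ?_ (measure_union_null (hyper_null n hn 0)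
      (hyper_null n hn (Real.pi * k / m)))
    rintro x ⟨h1, h2⟩
    refine sector_inter n m hm j k hjk hk x ?_ ?_
    · simpa using TE_sector n m hn j _ h1
    · simpa using TE_sector n m hn k _ h2
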